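/- For any κ > 0, the map ψ ↦ T(ψ,κ) is strictly monotonically decreasing on (ψ↓(κ), ∞), and it satisfies lim_{ψ→∞} T(ψ,κ) < 0 < lim_{ψ↓ψ↓(κ)} T(ψ,κ). -/

import Mathlib

open MeasureTheory ProbabilityTheory Real Filter Set Topology

noncomputable section

namespace MaxMargin

/-- The standard Gaussian measure on `ℝ`. -/
def stdG : Measure ℝ := gaussianReal 0 1

/-- The function `F_κ(c₁,c₂) = (E[((κ − c₁·Y·G − c₂·Z)₊)²])^{1/2}` where `G, Z` are independent
standard Gaussians and, conditionally on `G`, `Y ∈ {+1,−1}` with `P(Y = +1 | G) = f(G)`. -/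
def Fk (f : ℝ → ℝ) (κ c₁ c₂ : ℝ) : ℝ :=
  Real.sqrt (∫ g, ∫ z,
    (f g * (max (κ - c₁ * g - c₂ * z) 0) ^ 2
      + (1 - f g) * (max (κ + c₁ * g - c₂ * z) 0) ^ 2) ∂stdG ∂stdG)

/-- Non-degeneracy of `f`: the variable `T = Y·G` satisfies `P(T < x) > 0` and `P(T > x) > 0`
for every `x ∈ ℝ`. -/
def NonDeg (f : ℝ → ℝ) : Prop :=
  ∀ x : ℝ,
    (0 < ∫ g, (f g * (if g < x then (1:ℝ) else 0)
          + (1 - f g) * (if -g < x then (1:ℝ) else 0)) ∂stdG) ∧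
    (0 < ∫ g, (f g * (if x < g then (1:ℝ) else 0)
          + (1 - f g) * (if x < -g then (1:ℝ) else 0)) ∂stdG)


/-- Points of `ℝ³` carrying the coordinates `(G, X, W)`. -/
abbrev Pt : Type := ℝ × ℝ × ℝ

/-- First coordinate `G`. -/
def Gc : Pt → ℝ := fun q => q.1

/-- Second coordinate `X`. -/
def Xc : Pt → ℝ := fun q => q.2.1

/-- Third coordinate `W`. -/
def Wc : Pt → ℝ := fun q => q.2.2

/-- The inner product `⟨h₁,h₂⟩_P = E_P[h₁h₂]`. -/
def ip (P : Measure Pt) (h₁ h₂ : Pt → ℝ) : ℝ := ∫ q, h₁ q * h₂ q ∂P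

/-- The norm `‖h‖_P = ⟨h,h⟩_P^{1/2}`. -/
def pnorm (P : Measure Pt) (h : Pt → ℝ) : ℝ := Real.sqrt (ip P h h)

/-- Projection onto the orthogonal complement of `W`: `Π_{W⊥}(h) = h − ⟨h,W⟩_P·W`. -/
def projW (P : Measure Pt) (h : Pt → ℝ) : Pt → ℝ := fun q => h q - ip P h Wc * Wc q

/-- Partial derivative of `F_κ` in its first argument. -/
def d1F (f : ℝ → ℝ) (κ c₁ c₂ : ℝ) : ℝ := deriv (fun t => Fk f κ t c₂) c₁

/-- Partial derivative of `F_κ` in its second argument. -/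
def d2F (f : ℝ → ℝ) (κ c₁ c₂ : ℝ) : ℝ := deriv (fun t => Fk f κ c₁ t) c₂

/-- `ψ*(0) = min_{c ∈ ℝ} F₀(c,1)²`. -/
def psiStar0 (f : ℝ → ℝ) : ℝ := ⨅ c : ℝ, (Fk f 0 c 1) ^ 2

/-- The functional `𝓡_{ψ,κ,P}(h) = ψ^{−1/2}·F_κ(⟨h, X^{1/2}W⟩_P, ‖Π_{W⊥}(X^{1/2}h)‖_P)
+ ⟨h, X^{1/2}·Π_{W⊥}(G)⟩_P`. -/
def Rfun (f : ℝ → ℝ) (P : Measure Pt) (ψ κ : ℝ) (h : Pt → ℝ) : ℝ :=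
  (Real.sqrt ψ)⁻¹ *
      Fk f κ (ip P h (fun q => Real.sqrt (Xc q) * Wc q))
        (pnorm P (projW P (fun q => Real.sqrt (Xc q) * h q)))
    + ip P h (fun q => Real.sqrt (Xc q) * projW P Gc q)

/-- `ζ(P) = ‖X^{−1/2}W‖_P^{−1}`. -/
def zetaP (P : Measure Pt) : ℝ := (pnorm P (fun q => (Real.sqrt (Xc q))⁻¹ * Wc q))⁻¹

/-- `ζ = (E_μ[X⁻¹W²])^{−1/2}` for `(X,W) ~ μ`. -/
def zetaMu (μ : Measure (ℝ × ℝ)) : ℝ := (Real.sqrt (∫ q, (q.1)⁻¹ * q.2 ^ 2 ∂μ))⁻¹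

/-- `ω = (E_μ[(1 − ζ²X⁻¹)²W²])^{1/2}`. -/
def omegaMu (μ : Measure (ℝ × ℝ)) : ℝ :=
  Real.sqrt (∫ q, (1 - (zetaMu μ) ^ 2 * (q.1)⁻¹) ^ 2 * q.2 ^ 2 ∂μ)

/-- `ψ₊(κ)`. -/
def psiPlus (f : ℝ → ℝ) (μ : Measure (ℝ × ℝ)) (κ : ℝ) : ℝ :=
  if 0 < d1F f κ (zetaMu μ) 0 then 0
  else (d2F f κ (zetaMu μ) 0) ^ 2 - (omegaMu μ) ^ 2 * (d1F f κ (zetaMu μ) 0) ^ 2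

/-- `ψ₋(κ)`. -/
def psiMinus (f : ℝ → ℝ) (μ : Measure (ℝ × ℝ)) (κ : ℝ) : ℝ :=
  if 0 < d1F f κ (-(zetaMu μ)) 0 then 0
  else (d2F f κ (-(zetaMu μ)) 0) ^ 2 - (omegaMu μ) ^ 2 * (d1F f κ (-(zetaMu μ)) 0) ^ 2

/-- `ψ↓(κ) = max{ψ*(0), ψ₊(κ), ψ₋(κ)}`. -/
def psiDown (f : ℝ → ℝ) (μ : Measure (ℝ × ℝ)) (κ : ℝ) : ℝ :=
  max (max (psiStar0 f) (psiPlus f μ κ)) (psiMinus f μ κ)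

/-- The system of equations with expectations over `(X,W) ~ μ`:
with `A = ∂₁F_κ(c₁,c₂) − c₁c₂⁻¹∂₂F_κ(c₁,c₂)` and
`D = c₂⁻¹∂₂F_κ(c₁,c₂)·X^{1/2} + ψ^{1/2}·s·X^{−1/2}`,
`−c₁ = E_μ[A·W²·X^{1/2}/D]`, `c₁² + c₂² = E_μ[(ψX + A²W²X)/D²]`, `1 = E_μ[(ψ + A²W²)/D²]`. -/
def SolSysMu (f : ℝ → ℝ) (μ : Measure (ℝ × ℝ)) (ψ κ c₁ c₂ s : ℝ) : Prop :=
  (-c₁ = ∫ q, (d1F f κ c₁ c₂ - c₁ * c₂⁻¹ * d2F f κ c₁ c₂) * q.2 ^ 2 * Real.sqrt q.1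
      / (c₂⁻¹ * d2F f κ c₁ c₂ * Real.sqrt q.1 + Real.sqrt ψ * s * (Real.sqrt q.1)⁻¹) ∂μ)
  ∧ (c₁ ^ 2 + c₂ ^ 2 = ∫ q,
      (ψ * q.1 + (d1F f κ c₁ c₂ - c₁ * c₂⁻¹ * d2F f κ c₁ c₂) ^ 2 * q.2 ^ 2 * q.1)
      / (c₂⁻¹ * d2F f κ c₁ c₂ * Real.sqrt q.1 + Real.sqrt ψ * s * (Real.sqrt q.1)⁻¹) ^ 2 ∂μ)
  ∧ (1 = ∫ q,
      (ψ + (d1F f κ c₁ c₂ - c₁ * c₂⁻¹ * d2F f κ c₁ c₂) ^ 2 * q.2 ^ 2)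
      / (c₂⁻¹ * d2F f κ c₁ c₂ * Real.sqrt q.1 + Real.sqrt ψ * s * (Real.sqrt q.1)⁻¹) ^ 2 ∂μ)

/-- `T(ψ,κ) = ψ^{−1/2}(F_κ(c₁,c₂) − c₁∂₁F_κ(c₁,c₂) − c₂∂₂F_κ(c₁,c₂)) − s`. -/
def Tval (f : ℝ → ℝ) (ψ κ c₁ c₂ s : ℝ) : ℝ :=
  (Real.sqrt ψ)⁻¹ * (Fk f κ c₁ c₂ - c₁ * d1F f κ c₁ c₂ - c₂ * d2F f κ c₁ c₂) - s

/-! For a design law `P = N(0,1) ⊗ μ`, the value `T(ψ,κ)` is the minimum of the functional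
`𝓡_{ψ,κ,P}` over the unit ball of `L²(P)`: the system of equations says that the direction
`h = −(ψ^{1/2}G + A·W)/D` satisfies the Karush–Kuhn–Tucker conditions, and these are sufficient
because `F_κ` lies above its tangent planes.

All claims are then read off from `𝓡_{ψ,κ,P}` at a fixed `h`.
* `F_κ > 0`, so `𝓡_{ψ,κ,P}(h)` is strictly decreasing in `ψ`, and so is its minimum.
* As `ψ → ∞`, `𝓡_{ψ,κ,P}(−G)` tends to `−E[X^{1/2}] < 0`, so `T(ψ,κ)` is eventually negative.
* By homogeneity of `F₀`, `F_κ(c₁,c₂) > F₀(c₁,c₂) ≥ ψ*(0)^{1/2}c₂`. By compactness the strict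
  inequality survives with a slightly larger `ψ` in place of `ψ*(0)`, and since
  `|⟨X^{1/2}h, G⟩_P| ≤ ‖Π_{W⊥}(X^{1/2}h)‖_P`, this gives `𝓡_{ψ,κ,P} > 0` on the ball.

The last point reaches down to `ψ↓(κ)` because `F_κ(c₁,·)` is even: `∂₂F_κ(·,0) = 0` forces
`ψ₊(κ), ψ₋(κ) ≤ 0`, hence `ψ↓(κ) = ψ*(0)`.
-/

section PosPartNorm

variable {Ω : Type*} [MeasurableSpace Ω] {M : Measure Ω} {x y d : Ω → ℝ}

lemma abs_integral_mul_le_sqrt_mul_sqrt (hx : MemLp x 2 M) (hy : MemLp y 2 M) :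
    |∫ w, x w * y w ∂M| ≤ √(∫ w, x w ^ 2 ∂M) * √(∫ w, y w ^ 2 ∂M) := by
  have inner_toLp {u v : Ω → ℝ} (hu : MemLp u 2 M) (hv : MemLp v 2 M) :
      inner ℝ (hu.toLp u) (hv.toLp v) = ∫ w, u w * v w ∂M := by
    rw [L2.inner_def]
    refine integral_congr_ae ?_
    filter_upwards [hu.coeFn_toLp, hv.coeFn_toLp] with w hu hv
    rw [hu, hv, RCLike.inner_apply, conj_trivial, mul_comm]
  have norm_toLp {u : Ω → ℝ} (hu : MemLp u 2 M) : ‖hu.toLp u‖ = √(∫ w, u w ^ 2 ∂M) := by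
    rw [norm_eq_sqrt_real_inner, inner_toLp]
    simp only [sq]
  rw [← inner_toLp hx hy, ← norm_toLp hx, ← norm_toLp hy]
  exact abs_real_inner_le_norm _ _

/-- The one-sided `L²` seminorm `(E[(x₊)²])^{1/2}`; `F_κ` is its restriction to the affine
functions `κ - c₁ T - c₂ Z`. -/
def posPartNorm (M : Measure Ω) (x : Ω → ℝ) : ℝ := √(∫ w, (max (x w) 0) ^ 2 ∂M)

lemma sq_posPartNorm (M : Measure Ω) (x : Ω → ℝ) :
    posPartNorm M x ^ 2 = ∫ w, (max (x w) 0) ^ 2 ∂M :=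
  Real.sq_sqrt (integral_nonneg fun _ => sq_nonneg _)

lemma posPartNorm_const_mul {c : ℝ} (hc : 0 ≤ c) (x : Ω → ℝ) :
    posPartNorm M (fun w => c * x w) = c * posPartNorm M x := by
  have h (w : Ω) : max (c * x w) 0 = c * max (x w) 0 := by
    rw [mul_max_of_nonneg _ _ hc, mul_zero]
  simp only [posPartNorm, h, mul_pow, integral_const_mul]
  rw [Real.sqrt_mul (sq_nonneg c), Real.sqrt_sq hc]

lemma posPartNorm_pos (hx : MemLp x 2 M) (h : 0 < M {w | 0 < x w}) : 0 < posPartNorm M x := by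
  refine Real.sqrt_pos.2 ?_
  rw [integral_pos_iff_support_of_nonneg (fun _ => sq_nonneg _) hx.pos_part.integrable_sq]
  refine h.trans_le (measure_mono fun w (hw : 0 < x w) => ?_)
  simp [max_eq_left hw.le, hw.ne']

lemma posPartNorm_lt_posPartNorm (hx : MemLp x 2 M) (hy : MemLp y 2 M) (hxy : ∀ w, x w < y w)
    (hpos : 0 < posPartNorm M y) : posPartNorm M x < posPartNorm M y := by
  have hle (w : Ω) : (max (x w) 0) ^ 2 ≤ (max (y w) 0) ^ 2 :=
    pow_le_pow_left₀ (le_max_right _ _) (max_le_max_right _ (hxy w).le) 2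
  have hix := hx.pos_part.integrable_sq
  have hiy := hy.pos_part.integrable_sq
  refine Real.sqrt_lt_sqrt (integral_nonneg fun _ => sq_nonneg _)
    ((integral_mono hix hiy hle).lt_of_ne fun heq => hpos.ne' ?_)
  have hae := (integral_eq_iff_of_ae_le hix hiy (ae_of_all _ hle)).1 heq
  rw [posPartNorm, Real.sqrt_eq_zero', integral_eq_zero_of_ae]
  filter_upwards [hae] with w hw
  have hmax : max (x w) 0 = max (y w) 0 :=
    (pow_left_inj₀ (le_max_right _ _) (le_max_right _ _) two_ne_zero).1 hw
  have hy0 : y w ≤ 0 := not_lt.1 fun h => by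
    rw [max_eq_left h.le] at hmax
    exact (max_lt (hxy w) h).ne hmax
  simp [hy0]

lemma integral_posPart_mul_le (hx : MemLp x 2 M) (hy : MemLp y 2 M) :
    ∫ w, max (x w) 0 * y w ∂M ≤ posPartNorm M x * posPartNorm M y :=
  calc ∫ w, max (x w) 0 * y w ∂M
      ≤ ∫ w, max (x w) 0 * max (y w) 0 ∂M :=
        integral_mono (hx.pos_part.integrable_mul hy) (hx.pos_part.integrable_mul hy.pos_part)
          fun _ => mul_le_mul_of_nonneg_left (le_max_left _ _) (le_max_right _ _)
    _ ≤ posPartNorm M x * posPartNorm M y :=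
        (le_abs_self _).trans (abs_integral_mul_le_sqrt_mul_sqrt hx.pos_part hy.pos_part)

lemma abs_sq_posPart_add_sub_le (a δ : ℝ) :
    |(max (a + δ) 0) ^ 2 - (max a 0) ^ 2 - 2 * max a 0 * δ| ≤ δ ^ 2 := by
  rw [abs_le]
  rcases le_total (a + δ) 0 with h | h <;> rcases le_total a 0 with h' | h' <;>
    simp only [h, h', max_eq_left, max_eq_right] <;> constructor <;> nlinarith

lemma hasDerivAt_integral_sq_posPart (hx : MemLp x 2 M) (hd : MemLp d 2 M) (t : ℝ) :
    HasDerivAt (fun s => ∫ w, (max (x w + s * d w) 0) ^ 2 ∂M)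
      (2 * ∫ w, max (x w + t * d w) 0 * d w ∂M) t := by
  have hline (s : ℝ) : MemLp (fun w => x w + s * d w) 2 M := hx.add (hd.const_mul s)
  have hisq (s : ℝ) := (hline s).pos_part.integrable_sq
  have hidiff (s : ℝ) : Integrable
      (fun w => (max (x w + s * d w) 0) ^ 2 - (max (x w + t * d w) 0) ^ 2) M :=
    (hisq s).sub (hisq t)
  have hicross : Integrable (fun w => max (x w + t * d w) 0 * d w) M :=
    (hline t).pos_part.integrable_mul hd
  rw [hasDerivAt_iff_isLittleO]
  refine Asymptotics.IsBigO.trans_isLittleO (g := fun s => ‖s - t‖ ^ 2) ?_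
    (Asymptotics.isLittleO_pow_sub_sub t (by norm_num))
  refine Asymptotics.IsBigO.of_bound (∫ w, d w ^ 2 ∂M) (Eventually.of_forall fun s => ?_)
  calc ‖(∫ w, (max (x w + s * d w) 0) ^ 2 ∂M) - (∫ w, (max (x w + t * d w) 0) ^ 2 ∂M)
        - (s - t) • (2 * ∫ w, max (x w + t * d w) 0 * d w ∂M)‖
      = ‖∫ w, ((max (x w + t * d w + (s - t) * d w) 0) ^ 2 - (max (x w + t * d w) 0) ^ 2
          - 2 * max (x w + t * d w) 0 * ((s - t) * d w)) ∂M‖ := by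
        rw [smul_eq_mul, ← mul_assoc, ← integral_const_mul, ← integral_sub (hisq s) (hisq t),
          ← integral_sub (hidiff s) (hicross.const_mul _)]
        congr 2
        ext
        ring_nf
    _ ≤ ∫ w, ((s - t) * d w) ^ 2 ∂M :=
        norm_integral_le_of_norm_le (hd.const_mul _).integrable_sq
          (ae_of_all _ fun w => abs_sq_posPart_add_sub_le _ _)
    _ = (∫ w, d w ^ 2 ∂M) * ‖‖s - t‖ ^ 2‖ := by
        simp only [mul_pow, integral_const_mul, norm_pow, Real.norm_eq_abs, sq_abs]
        ring

lemma hasDerivAt_posPartNorm (hx : MemLp x 2 M) (hd : MemLp d 2 M) {t : ℝ}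
    (h0 : 0 < posPartNorm M (fun w => x w + t * d w)) :
    HasDerivAt (fun s => posPartNorm M (fun w => x w + s * d w))
      ((∫ w, max (x w + t * d w) 0 * d w ∂M) / posPartNorm M (fun w => x w + t * d w)) t := by
  have h := (hasDerivAt_integral_sq_posPart hx hd t).sqrt (Real.sqrt_pos.1 h0).ne'
  rwa [mul_div_mul_left _ _ two_ne_zero] at h

end PosPartNorm

section LabelLaw

instance : IsProbabilityMeasure stdG := by unfold stdG; infer_instance

instance : stdG.IsOpenPosMeasure :=
  (gaussianReal_absolutelyContinuous' 0 one_ne_zero).isOpenPosMeasure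

lemma map_neg_stdG : stdG.map (fun x => -x) = stdG := by
  rw [stdG, gaussianReal_map_neg, neg_zero]

lemma memLp_id_stdG : MemLp (fun x : ℝ => x) 2 stdG := memLp_id_gaussianReal 2

lemma integral_id_stdG : ∫ g, g ∂stdG = 0 := integral_id_gaussianReal

lemma integral_sq_stdG : ∫ g, g ^ 2 ∂stdG = 1 := by
  have h := variance_id_gaussianReal (μ := 0) (v := 1)
  rw [variance_eq_integral aemeasurable_id] at h
  simpa [integral_id_gaussianReal, stdG] using h

/-- `φ` is a conditional label probability `φ(g) = P(Y = +1 | G = g)`. -/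
structure IsLabelProb (φ : ℝ → ℝ) : Prop where
  measurable : Measurable φ
  mem_Icc (x : ℝ) : φ x ∈ Set.Icc (0 : ℝ) 1

/-- The law of `T = Y G`: the label `+1` keeps `G`, the label `-1` reflects it. -/
def labelLaw (φ : ℝ → ℝ) : Measure ℝ :=
  stdG.withDensity (fun g => ENNReal.ofReal (φ g))
    + (stdG.withDensity (fun g => ENNReal.ofReal (1 - φ g))).map (fun g => -g)

variable {φ : ℝ → ℝ}

namespace IsLabelProb

lemma labelLaw_le (hφ : IsLabelProb φ) : labelLaw φ ≤ stdG + stdG := by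
  have withDensity_le {u : ℝ → ℝ} (hu : ∀ g, u g ≤ 1) :
      stdG.withDensity (fun g => ENNReal.ofReal (u g)) ≤ stdG := by
    conv_rhs => rw [← withDensity_one (μ := stdG)]
    exact withDensity_mono (ae_of_all _ fun g => ENNReal.ofReal_le_one.2 (hu g))
  refine add_le_add (withDensity_le fun g => (hφ.mem_Icc g).2) ?_
  conv_rhs => rw [← map_neg_stdG]
  exact Measure.map_mono (withDensity_le fun g => sub_le_self 1 (hφ.mem_Icc g).1) measurable_neg

lemma isFiniteMeasure_labelLaw (hφ : IsLabelProb φ) : IsFiniteMeasure (labelLaw φ) :=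
  isFiniteMeasure_of_le _ hφ.labelLaw_le

lemma memLp_id_labelLaw (hφ : IsLabelProb φ) : MemLp (fun x : ℝ => x) 2 (labelLaw φ) := by
  refine MemLp.mono_measure hφ.labelLaw_le ?_
  rw [← two_smul ENNReal]
  exact memLp_id_stdG.smul_measure ENNReal.ofNat_ne_top

lemma integral_labelLaw (hφ : IsLabelProb φ) {H : ℝ → ℝ} (hH : Integrable H (labelLaw φ)) :
    ∫ t, H t ∂(labelLaw φ) = ∫ g, (φ g * H g + (1 - φ g) * H (-g)) ∂stdG := by
  have hφm := hφ.measurable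
  obtain ⟨hpos, hneg⟩ := integrable_add_measure.1 hH
  have hneg' := (integrable_map_measure hneg.1 measurable_neg.aemeasurable).1 hneg
  rw [labelLaw, integral_add_measure hpos hneg, integral_map measurable_neg.aemeasurable hneg.1]
  rw [integrable_withDensity_iff_integrable_smul' (by fun_prop) (by simp)] at hpos hneg'
  simp only [Function.comp_apply] at hneg'
  rw [integral_withDensity_eq_integral_toReal_smul (by fun_prop) (by simp),
    integral_withDensity_eq_integral_toReal_smul (by fun_prop) (by simp),
    ← integral_add hpos hneg']
  refine integral_congr_ae (ae_of_all _ fun g => ?_)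
  have hg := hφ.mem_Icc g
  simp only [smul_eq_mul, ENNReal.toReal_ofReal hg.1, ENNReal.toReal_ofReal (sub_nonneg.2 hg.2)]

lemma labelLaw_apply_of_neg_preimage_eq (hφ : IsLabelProb φ) {s : Set ℝ} (hs : MeasurableSet s)
    (hneg : (fun g => -g) ⁻¹' s = s) : labelLaw φ s = stdG s := by
  have hφm := hφ.measurable
  have hsum (g : ℝ) : ENNReal.ofReal (φ g) + ENNReal.ofReal (1 - φ g) = 1 := by
    rw [← ENNReal.ofReal_add (hφ.mem_Icc g).1 (sub_nonneg.2 (hφ.mem_Icc g).2),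
      add_sub_cancel, ENNReal.ofReal_one]
  rw [labelLaw, Measure.add_apply, Measure.map_apply measurable_neg hs, hneg,
    withDensity_apply _ hs, withDensity_apply _ hs, ← lintegral_add_left (by fun_prop)]
  simp only [hsum, setLIntegral_one]

lemma labelLaw_ball_pos (hφ : IsLabelProb φ) {ε : ℝ} (hε : 0 < ε) :
    0 < labelLaw φ (Metric.ball 0 ε) := by
  rw [hφ.labelLaw_apply_of_neg_preimage_eq measurableSet_ball (by ext g; simp)]
  exact Metric.measure_ball_pos _ _ hε

end IsLabelProb

end LabelLaw

section MarginNorm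

/-- The joint law of `(T, Z)`. -/
def marginLaw (φ : ℝ → ℝ) : Measure (ℝ × ℝ) := (labelLaw φ).prod stdG

/-- The margin `κ - c₁ T - c₂ Z`, as a function of `p = (T, Z)`. -/
def margin (κ c₁ c₂ : ℝ) (p : ℝ × ℝ) : ℝ := κ - c₁ * p.1 - c₂ * p.2

variable {φ : ℝ → ℝ} {κ : ℝ}

namespace IsLabelProb

lemma memLp_fst (hφ : IsLabelProb φ) : MemLp (fun p : ℝ × ℝ => p.1) 2 (marginLaw φ) :=
  have := hφ.isFiniteMeasure_labelLaw
  hφ.memLp_id_labelLaw.comp_fst stdG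

lemma memLp_snd (hφ : IsLabelProb φ) : MemLp (fun p : ℝ × ℝ => p.2) 2 (marginLaw φ) :=
  have := hφ.isFiniteMeasure_labelLaw
  memLp_id_stdG.comp_snd (labelLaw φ)

lemma memLp_margin (hφ : IsLabelProb φ) (κ c₁ c₂ : ℝ) :
    MemLp (margin κ c₁ c₂) 2 (marginLaw φ) := by
  have := hφ.isFiniteMeasure_labelLaw
  have : IsFiniteMeasure (marginLaw φ) := by unfold marginLaw; infer_instance
  exact ((memLp_const κ).sub (hφ.memLp_fst.const_mul c₁)).sub (hφ.memLp_snd.const_mul c₂)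

lemma Fk_eq_posPartNorm (hφ : IsLabelProb φ) (κ c₁ c₂ : ℝ) :
    Fk φ κ c₁ c₂ = posPartNorm (marginLaw φ) (margin κ c₁ c₂) := by
  have := hφ.isFiniteMeasure_labelLaw
  have hi : Integrable (fun p => (max (margin κ c₁ c₂ p) 0) ^ 2) ((labelLaw φ).prod stdG) :=
    (hφ.memLp_margin κ c₁ c₂).pos_part.integrable_sq
  have hz (a : ℝ) : Integrable (fun z => (max (a - c₂ * z) 0) ^ 2) stdG :=
    ((memLp_const a).sub (memLp_id_stdG.const_mul c₂)).pos_part.integrable_sq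
  rw [Fk, posPartNorm, marginLaw, integral_prod _ hi, hφ.integral_labelLaw hi.integral_prod_left]
  congr 1
  refine integral_congr_ae (ae_of_all _ fun g => ?_)
  simp only [integral_add ((hz _).const_mul _) ((hz _).const_mul _), integral_const_mul, margin,
    mul_neg, sub_neg_eq_add]

lemma Fk_neg (hφ : IsLabelProb φ) (κ c₁ c₂ : ℝ) : Fk φ κ c₁ (-c₂) = Fk φ κ c₁ c₂ := by
  have := hφ.isFiniteMeasure_labelLaw
  have hreflect : (marginLaw φ).map (Prod.map id fun z => -z) = marginLaw φ := by
    rw [marginLaw, ← Measure.map_prod_map _ _ measurable_id measurable_neg, Measure.map_id,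
      map_neg_stdG]
  rw [hφ.Fk_eq_posPartNorm, hφ.Fk_eq_posPartNorm, posPartNorm, posPartNorm, ← hreflect,
    integral_map (by fun_prop) (by unfold margin; fun_prop), hreflect]
  simp only [margin, Prod.map_fst, Prod.map_snd, id_eq, mul_neg, neg_mul, neg_neg]

lemma Fk_pos (hφ : IsLabelProb φ) (hκ : 0 < κ) (c₁ c₂ : ℝ) : 0 < Fk φ κ c₁ c₂ := by
  have := hφ.isFiniteMeasure_labelLaw
  rw [hφ.Fk_eq_posPartNorm]
  refine posPartNorm_pos (hφ.memLp_margin κ c₁ c₂) ?_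
  have hopen : IsOpen {p | 0 < margin κ c₁ c₂ p} :=
    isOpen_lt continuous_const (by unfold margin; fun_prop)
  obtain ⟨ε, hε, hball⟩ := Metric.isOpen_iff.1 hopen (0, 0) (by simpa [margin] using hκ)
  refine lt_of_lt_of_le ?_ (measure_mono hball)
  rw [← ball_prod_same, marginLaw, Measure.prod_prod]
  exact ENNReal.mul_pos (hφ.labelLaw_ball_pos hε).ne' (Metric.measure_ball_pos _ _ hε).ne'

lemma Fk_mul_d1F (hφ : IsLabelProb φ) (hκ : 0 < κ) (c₁ c₂ : ℝ) :
    Fk φ κ c₁ c₂ * d1F φ κ c₁ c₂ = -∫ p, max (margin κ c₁ c₂ p) 0 * p.1 ∂(marginLaw φ) := by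
  have hline (t : ℝ) : (fun p => margin κ 0 c₂ p + t * (-p.1)) = margin κ t c₂ := by
    ext p; simp only [margin]; ring
  have hpos := hφ.Fk_pos hκ c₁ c₂
  have h := hasDerivAt_posPartNorm (hφ.memLp_margin κ 0 c₂) hφ.memLp_fst.neg (t := c₁)
  simp only [Pi.neg_apply, ← hφ.Fk_eq_posPartNorm, congrFun (hline _) _] at h
  rw [d1F, (h hpos).deriv, mul_div_cancel₀ _ hpos.ne']
  simp only [mul_neg, integral_neg]

lemma Fk_mul_d2F (hφ : IsLabelProb φ) (hκ : 0 < κ) (c₁ c₂ : ℝ) :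
    Fk φ κ c₁ c₂ * d2F φ κ c₁ c₂ = -∫ p, max (margin κ c₁ c₂ p) 0 * p.2 ∂(marginLaw φ) := by
  have hline (t : ℝ) : (fun p => margin κ c₁ 0 p + t * (-p.2)) = margin κ c₁ t := by
    ext p; simp only [margin]; ring
  have hpos := hφ.Fk_pos hκ c₁ c₂
  have h := hasDerivAt_posPartNorm (hφ.memLp_margin κ c₁ 0) hφ.memLp_snd.neg (t := c₂)
  simp only [Pi.neg_apply, ← hφ.Fk_eq_posPartNorm, congrFun (hline _) _] at h
  rw [d2F, (h hpos).deriv, mul_div_cancel₀ _ hpos.ne']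
  simp only [mul_neg, integral_neg]

lemma integral_posPart_margin_mul_margin (hφ : IsLabelProb φ) (hκ : 0 < κ) (c₁ c₂ e₁ e₂ : ℝ) :
    ∫ p, max (margin κ c₁ c₂ p) 0 * margin κ e₁ e₂ p ∂(marginLaw φ)
      = Fk φ κ c₁ c₂ * (Fk φ κ c₁ c₂ + d1F φ κ c₁ c₂ * (e₁ - c₁)
          + d2F φ κ c₁ c₂ * (e₂ - c₂)) := by
  have hm := (hφ.memLp_margin κ c₁ c₂).pos_part
  have hi₁ : Integrable (fun p => (e₁ - c₁) * (max (margin κ c₁ c₂ p) 0 * p.1)) (marginLaw φ) :=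
    (hm.integrable_mul hφ.memLp_fst).const_mul _
  have hi₂ : Integrable (fun p => (e₂ - c₂) * (max (margin κ c₁ c₂ p) 0 * p.2)) (marginLaw φ) :=
    (hm.integrable_mul hφ.memLp_snd).const_mul _
  have hexpand (p : ℝ × ℝ) : max (margin κ c₁ c₂ p) 0 * margin κ e₁ e₂ p
      = (max (margin κ c₁ c₂ p) 0) ^ 2 - ((e₁ - c₁) * (max (margin κ c₁ c₂ p) 0 * p.1)
        + (e₂ - c₂) * (max (margin κ c₁ c₂ p) 0 * p.2)) := by
    have hsq : (max (margin κ c₁ c₂ p) 0) ^ 2 = max (margin κ c₁ c₂ p) 0 * margin κ c₁ c₂ p := by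
      rcases le_total (margin κ c₁ c₂ p) 0 with h | h <;> simp [h, sq]
    rw [hsq]
    simp only [margin]
    ring
  have hi₁₂ : Integrable (fun p => (e₁ - c₁) * (max (margin κ c₁ c₂ p) 0 * p.1)
      + (e₂ - c₂) * (max (margin κ c₁ c₂ p) 0 * p.2)) (marginLaw φ) := hi₁.add hi₂
  simp only [hexpand]
  rw [integral_sub hm.integrable_sq hi₁₂, integral_add hi₁ hi₂, integral_const_mul,
    integral_const_mul, ← sq_posPartNorm, ← hφ.Fk_eq_posPartNorm]
  linear_combination -(e₁ - c₁) * hφ.Fk_mul_d1F hκ c₁ c₂ - (e₂ - c₂) * hφ.Fk_mul_d2F hκ c₁ c₂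

lemma Fk_add_d1F_mul_add_d2F_mul_le (hφ : IsLabelProb φ) (hκ : 0 < κ) (c₁ c₂ e₁ e₂ : ℝ) :
    Fk φ κ c₁ c₂ + d1F φ κ c₁ c₂ * (e₁ - c₁) + d2F φ κ c₁ c₂ * (e₂ - c₂) ≤ Fk φ κ e₁ e₂ := by
  have h := integral_posPart_mul_le (hφ.memLp_margin κ c₁ c₂) (hφ.memLp_margin κ e₁ e₂)
  rw [hφ.integral_posPart_margin_mul_margin hκ, ← hφ.Fk_eq_posPartNorm,
    ← hφ.Fk_eq_posPartNorm] at h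
  exact le_of_mul_le_mul_left h (hφ.Fk_pos hκ c₁ c₂)

lemma d2F_nonneg (hφ : IsLabelProb φ) (hκ : 0 < κ) (c₁ : ℝ) {c₂ : ℝ} (hc₂ : 0 < c₂) :
    0 ≤ d2F φ κ c₁ c₂ := by
  have h := hφ.Fk_add_d1F_mul_add_d2F_mul_le hκ c₁ c₂ c₁ (-c₂)
  rw [hφ.Fk_neg] at h
  nlinarith

lemma d2F_zero (hφ : IsLabelProb φ) (κ c₁ : ℝ) : d2F φ κ c₁ 0 = 0 := by
  have h := deriv_comp_neg (fun t => Fk φ κ c₁ t) 0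
  simp only [hφ.Fk_neg, neg_zero] at h
  exact self_eq_neg.1 h

lemma continuous_Fk (hφ : IsLabelProb φ) (hκ : 0 < κ) :
    Continuous (fun c : ℝ × ℝ => Fk φ κ c.1 c.2) := by
  rw [← continuousOn_univ]
  refine ConvexOn.continuousOn isOpen_univ ⟨convex_univ, ?_⟩
  rintro ⟨x₁, x₂⟩ - ⟨y₁, y₂⟩ - a b ha hb hab
  obtain rfl : b = 1 - a := by linarith
  have support := hφ.Fk_add_d1F_mul_add_d2F_mul_le hκ (a * x₁ + (1 - a) * y₁)
    (a * x₂ + (1 - a) * y₂)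
  have hx := mul_le_mul_of_nonneg_left (support x₁ x₂) ha
  have hy := mul_le_mul_of_nonneg_left (support y₁ y₂) hb
  simp only [Prod.smul_mk, smul_eq_mul, Prod.mk_add_mk]
  linarith

end IsLabelProb

end MarginNorm

section Threshold

variable {φ : ℝ → ℝ} {κ : ℝ}

lemma psiStar0_nonneg (φ : ℝ → ℝ) : 0 ≤ psiStar0 φ := Real.iInf_nonneg fun _ => sq_nonneg _

lemma sqrt_psiStar0_le_Fk (φ : ℝ → ℝ) (c : ℝ) : √(psiStar0 φ) ≤ Fk φ 0 c 1 :=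
  Real.sqrt_le_iff.2 ⟨Real.sqrt_nonneg _,
    ciInf_le (f := fun c => Fk φ 0 c 1 ^ 2) ⟨0, by rintro _ ⟨c, rfl⟩; positivity⟩ c⟩

namespace IsLabelProb

lemma Fk_zero_mul (hφ : IsLabelProb φ) (c₁ : ℝ) {c₂ : ℝ} (hc₂ : 0 ≤ c₂) :
    Fk φ 0 (c₂ * c₁) c₂ = c₂ * Fk φ 0 c₁ 1 := by
  rw [hφ.Fk_eq_posPartNorm, hφ.Fk_eq_posPartNorm, ← posPartNorm_const_mul hc₂]
  congr 1 with p
  simp only [margin]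
  ring

lemma Fk_zero_lt_Fk (hφ : IsLabelProb φ) (hκ : 0 < κ) (c₁ c₂ : ℝ) :
    Fk φ 0 c₁ c₂ < Fk φ κ c₁ c₂ := by
  have hpos := hφ.Fk_pos hκ c₁ c₂
  rw [hφ.Fk_eq_posPartNorm] at hpos ⊢
  rw [hφ.Fk_eq_posPartNorm]
  refine posPartNorm_lt_posPartNorm (hφ.memLp_margin 0 c₁ c₂) (hφ.memLp_margin κ c₁ c₂)
    (fun p => ?_) hpos
  simp only [margin]
  linarith

lemma sqrt_psiStar0_mul_lt_Fk (hφ : IsLabelProb φ) (hκ : 0 < κ) (c₁ : ℝ) {c₂ : ℝ}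
    (hc₂ : 0 ≤ c₂) : √(psiStar0 φ) * c₂ < Fk φ κ c₁ c₂ := by
  rcases hc₂.eq_or_lt with rfl | hpos
  · simpa only [mul_zero] using hφ.Fk_pos hκ c₁ 0
  calc √(psiStar0 φ) * c₂
      ≤ Fk φ 0 (c₁ / c₂) 1 * c₂ := mul_le_mul_of_nonneg_right (sqrt_psiStar0_le_Fk φ _) hc₂
    _ = Fk φ 0 c₁ c₂ := by rw [mul_comm, ← hφ.Fk_zero_mul _ hc₂, mul_div_cancel₀ _ hpos.ne']
    _ < Fk φ κ c₁ c₂ := hφ.Fk_zero_lt_Fk hκ c₁ c₂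

lemma exists_psiStar0_lt_forall_sqrt_mul_lt_Fk (hφ : IsLabelProb φ) (hκ : 0 < κ) {R : ℝ}
    (hR : 0 < R) :
    ∃ ψ, psiStar0 φ < ψ ∧ ∀ c₁ c₂, |c₁| ≤ R → 0 ≤ c₂ → c₂ ≤ R → √ψ * c₂ < Fk φ κ c₁ c₂ := by
  have hgap : Continuous fun c : ℝ × ℝ => Fk φ κ c.1 c.2 - √(psiStar0 φ) * c.2 :=
    (hφ.continuous_Fk hκ).sub (by fun_prop)
  obtain ⟨c, hc, hmin⟩ := (isCompact_Icc.prod isCompact_Icc).exists_isMinOn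
    (s := Set.Icc (-R) R ×ˢ Set.Icc 0 R) ⟨(0, 0), by simp [hR.le]⟩ hgap.continuousOn
  obtain ⟨δ, hδ0, hδ⟩ := exists_between (sub_pos.2 (hφ.sqrt_psiStar0_mul_lt_Fk hκ c.1 hc.2.1))
  have hδR : 0 < δ / R := div_pos hδ0 hR
  refine ⟨(√(psiStar0 φ) + δ / R) ^ 2, ?_, fun c₁ c₂ h₁ h₂ h₂R => ?_⟩
  · exact (Real.sqrt_lt' (by positivity)).1 (lt_add_of_pos_right _ hδR)
  · have hlt : δ < Fk φ κ c₁ c₂ - √(psiStar0 φ) * c₂ :=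
      hδ.trans_le (isMinOn_iff.1 hmin (c₁, c₂) ⟨abs_le.1 h₁, h₂, h₂R⟩)
    have hle : δ / R * c₂ ≤ δ :=
      (mul_le_mul_of_nonneg_left h₂R hδR.le).trans_eq (div_mul_cancel₀ _ hR.ne')
    rw [Real.sqrt_sq (by positivity)]
    linarith

lemma psiDown_eq_psiStar0 (hφ : IsLabelProb φ) (μ : Measure (ℝ × ℝ)) (κ : ℝ) :
    psiDown φ μ κ = psiStar0 φ := by
  have nonpos (c : ℝ) : (if 0 < d1F φ κ c 0 then 0
      else d2F φ κ c 0 ^ 2 - omegaMu μ ^ 2 * d1F φ κ c 0 ^ 2) ≤ 0 := by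
    split_ifs
    · exact le_rfl
    · rw [hφ.d2F_zero, ← mul_pow]
      nlinarith [sq_nonneg (omegaMu μ * d1F φ κ c 0)]
  rw [psiDown, psiPlus, psiMinus, max_eq_left ((nonpos _).trans (psiStar0_nonneg φ)),
    max_eq_left ((nonpos _).trans (psiStar0_nonneg φ))]

end IsLabelProb

end Threshold

section Design

/-- Multiplication by `X^{1/2}`. -/
def mulSqrtX (h : Pt → ℝ) : Pt → ℝ := fun q => √(Xc q) * h q

/-- The closed unit ball of `L²(P)`, over which `𝓡_{ψ,κ,P}` is minimized. -/
def unitBall (P : Measure Pt) : Set (Pt → ℝ) := {h | MemLp h 2 P ∧ pnorm P h ≤ 1}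

/-- The moment conditions on the law `P` of `(G, X, W)`: `G` and `W` are orthonormal in `L²(P)`
and `0 < X ≤ B` almost surely. -/
structure IsNormalizedDesign (P : Measure Pt) (B : ℝ) : Prop where
  memLp_Gc : MemLp Gc 2 P
  memLp_Wc : MemLp Wc 2 P
  ip_Gc_Gc : ip P Gc Gc = 1
  ip_Gc_Wc : ip P Gc Wc = 0
  ip_Wc_Wc : ip P Wc Wc = 1
  Xc_mem : ∀ᵐ q ∂P, Xc q ∈ Set.Ioc 0 B

variable {P : Measure Pt} {B : ℝ} {h k : Pt → ℝ}

lemma ip_comm (P : Measure Pt) (h k : Pt → ℝ) : ip P h k = ip P k h := by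
  simp only [ip, mul_comm]

lemma ip_mulSqrtX_left (P : Measure Pt) (h k : Pt → ℝ) :
    ip P (mulSqrtX h) k = ip P h (mulSqrtX k) := by
  simp only [ip, mulSqrtX, mul_left_comm, mul_assoc]

lemma pnorm_nonneg (P : Measure Pt) (h : Pt → ℝ) : 0 ≤ pnorm P h := Real.sqrt_nonneg _

lemma sq_pnorm (P : Measure Pt) (h : Pt → ℝ) : pnorm P h ^ 2 = ip P h h :=
  Real.sq_sqrt (integral_nonneg fun q => mul_self_nonneg (h q))

lemma abs_ip_le_pnorm_mul_pnorm (hh : MemLp h 2 P) (hk : MemLp k 2 P) :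
    |ip P h k| ≤ pnorm P h * pnorm P k := by
  simpa only [ip, pnorm, sq] using abs_integral_mul_le_sqrt_mul_sqrt hh hk

lemma ip_le_one_of_mem_unitBall (hh : h ∈ unitBall P) (hk : k ∈ unitBall P) : ip P h k ≤ 1 :=
  (le_abs_self _).trans <| (abs_ip_le_pnorm_mul_pnorm hh.1 hk.1).trans <|
    mul_le_one₀ hh.2 (pnorm_nonneg P k) hk.2

namespace IsNormalizedDesign

lemma pnorm_Gc (hP : IsNormalizedDesign P B) : pnorm P Gc = 1 := by
  rw [pnorm, hP.ip_Gc_Gc, Real.sqrt_one]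

lemma pnorm_Wc (hP : IsNormalizedDesign P B) : pnorm P Wc = 1 := by
  rw [pnorm, hP.ip_Wc_Wc, Real.sqrt_one]

lemma norm_mulSqrtX_le (hP : IsNormalizedDesign P B) (h : Pt → ℝ) :
    ∀ᵐ q ∂P, ‖mulSqrtX h q‖ ≤ √B * ‖h q‖ := by
  filter_upwards [hP.Xc_mem] with q hq
  rw [mulSqrtX, norm_mul, Real.norm_of_nonneg (Real.sqrt_nonneg _)]
  exact mul_le_mul_of_nonneg_right (Real.sqrt_le_sqrt hq.2) (norm_nonneg _)

lemma memLp_mulSqrtX (hP : IsNormalizedDesign P B) (hh : MemLp h 2 P) :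
    MemLp (mulSqrtX h) 2 P := by
  have hX : AEStronglyMeasurable (fun q => √(Xc q)) P := by
    unfold Xc
    fun_prop
  exact hh.of_le_mul (hX.mul hh.1) (hP.norm_mulSqrtX_le h)

lemma pnorm_mulSqrtX_le (hP : IsNormalizedDesign P B) (hh : h ∈ unitBall P) :
    pnorm P (mulSqrtX h) ≤ √B := by
  have hle : ip P (mulSqrtX h) (mulSqrtX h) ≤ √B ^ 2 * ip P h h := by
    rw [ip, ip, ← integral_const_mul]
    refine integral_mono_ae ((hP.memLp_mulSqrtX hh.1).integrable_mul (hP.memLp_mulSqrtX hh.1))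
      ((hh.1.integrable_mul hh.1).const_mul _) ?_
    filter_upwards [hP.norm_mulSqrtX_le h] with q hq
    have hsq := pow_le_pow_left₀ (norm_nonneg _) hq 2
    rwa [mul_pow, Real.norm_eq_abs, Real.norm_eq_abs, sq_abs, sq_abs, sq (h q),
      sq (mulSqrtX h q)] at hsq
  have hone : ip P h h ≤ 1 := sq_pnorm P h ▸ pow_le_one₀ (pnorm_nonneg P h) hh.2
  refine Real.sqrt_le_iff.2 ⟨Real.sqrt_nonneg B, hle.trans ?_⟩
  exact mul_le_of_le_one_right (sq_nonneg _) hone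

lemma memLp_projW (hP : IsNormalizedDesign P B) (hh : MemLp h 2 P) : MemLp (projW P h) 2 P :=
  hh.sub (hP.memLp_Wc.const_mul _)

lemma ip_projW_left (hP : IsNormalizedDesign P B) (hh : MemLp h 2 P) (hk : MemLp k 2 P) :
    ip P (projW P h) k = ip P h k - ip P h Wc * ip P Wc k := by
  have hhk : Integrable (fun q => h q * k q) P := hh.integrable_mul hk
  have hWk : Integrable (fun q => (∫ r, h r * Wc r ∂P) * (Wc q * k q)) P :=
    (hP.memLp_Wc.integrable_mul hk).const_mul _
  simp only [ip]
  rw [← integral_const_mul, ← integral_sub hhk hWk]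
  simp only [projW, ip, sub_mul, mul_assoc]

lemma ip_projW_projW (hP : IsNormalizedDesign P B) (hh : MemLp h 2 P) (hk : MemLp k 2 P) :
    ip P (projW P h) (projW P k) = ip P h k - ip P h Wc * ip P k Wc := by
  rw [hP.ip_projW_left hh (hP.memLp_projW hk), ip_comm P h, ip_comm P Wc,
    hP.ip_projW_left hk hh, hP.ip_projW_left hk hP.memLp_Wc, hP.ip_Wc_Wc, ip_comm P h k,
    ip_comm P Wc h]
  ring

lemma sq_pnorm_projW (hP : IsNormalizedDesign P B) (hh : MemLp h 2 P) :
    pnorm P (projW P h) ^ 2 = ip P h h - ip P h Wc ^ 2 := by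
  rw [sq_pnorm, hP.ip_projW_projW hh hh, sq]

lemma pnorm_projW_le (hP : IsNormalizedDesign P B) (hh : MemLp h 2 P) :
    pnorm P (projW P h) ≤ pnorm P h := by
  rw [← sq_le_sq₀ (pnorm_nonneg P _) (pnorm_nonneg P h), hP.sq_pnorm_projW hh, sq_pnorm]
  exact sub_le_self _ (sq_nonneg _)

lemma abs_ip_Wc_le (hP : IsNormalizedDesign P B) (hh : MemLp h 2 P) :
    |ip P h Wc| ≤ pnorm P h := by
  have hle := abs_ip_le_pnorm_mul_pnorm hh hP.memLp_Wc
  rwa [hP.pnorm_Wc, mul_one] at hle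

lemma abs_ip_Gc_le_pnorm_projW (hP : IsNormalizedDesign P B) (hh : MemLp h 2 P) :
    |ip P h Gc| ≤ pnorm P (projW P h) := by
  have hle := abs_ip_le_pnorm_mul_pnorm (hP.memLp_projW hh) hP.memLp_Gc
  rwa [hP.pnorm_Gc, mul_one, hP.ip_projW_left hh hP.memLp_Gc, ip_comm P Wc, hP.ip_Gc_Wc, mul_zero,
    sub_zero] at hle

lemma projW_Gc (hP : IsNormalizedDesign P B) : projW P Gc = Gc := by
  ext q
  rw [projW, hP.ip_Gc_Wc, zero_mul, sub_zero]

lemma Rfun_eq (hP : IsNormalizedDesign P B) (φ : ℝ → ℝ) (ψ κ : ℝ) (h : Pt → ℝ) :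
    Rfun φ P ψ κ h
      = (√ψ)⁻¹ * Fk φ κ (ip P (mulSqrtX h) Wc) (pnorm P (projW P (mulSqrtX h)))
        + ip P (mulSqrtX h) Gc := by
  rw [ip_mulSqrtX_left, ip_mulSqrtX_left, Rfun, hP.projW_Gc]
  rfl

lemma exists_mem_unitBall_ip_mulSqrtX_Gc_neg (hP : IsNormalizedDesign P B) :
    ∃ h ∈ unitBall P, ip P (mulSqrtX h) Gc < 0 := by
  refine ⟨fun q => -Gc q, ⟨hP.memLp_Gc.neg, ?_⟩, ?_⟩
  · simp only [pnorm, ip, neg_mul_neg]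
    exact hP.pnorm_Gc.le
  have hint : Integrable (fun q => mulSqrtX Gc q * Gc q) P :=
    (hP.memLp_mulSqrtX hP.memLp_Gc).integrable_mul hP.memLp_Gc
  have hnonneg : 0 ≤ fun q => mulSqrtX Gc q * Gc q := fun q => by
    simpa only [mulSqrtX, mul_assoc, Pi.zero_apply] using
      mul_nonneg (Real.sqrt_nonneg _) (mul_self_nonneg _)
  have hpos : 0 < ip P (mulSqrtX Gc) Gc := by
    refine (integral_nonneg hnonneg).lt_of_ne' fun h0 => one_ne_zero (α := ℝ) ?_
    rw [← hP.ip_Gc_Gc, ip, integral_eq_zero_of_ae]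
    filter_upwards [(integral_eq_zero_iff_of_nonneg hnonneg hint).1 h0, hP.Xc_mem] with q hq hX
    have hX0 := (Real.sqrt_pos.2 hX.1).ne'
    simpa [mulSqrtX, hX0] using hq
  simpa only [ip, mulSqrtX, mul_neg, neg_mul, integral_neg, neg_lt_zero] using hpos

end IsNormalizedDesign

end Design

section Minimizer

variable {P : Measure Pt} {B : ℝ} {φ : ℝ → ℝ} {ψ κ c₁ c₂ s : ℝ} {h k : Pt → ℝ}

/-- The coefficient `A = ∂₁F_κ(c₁,c₂) − c₁c₂⁻¹∂₂F_κ(c₁,c₂)` of the system `SolSysMu`. -/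
def sysCoeff (φ : ℝ → ℝ) (κ c₁ c₂ : ℝ) : ℝ := d1F φ κ c₁ c₂ - c₁ * c₂⁻¹ * d2F φ κ c₁ c₂

/-- The Karush–Kuhn–Tucker conditions for minimizing `𝓡_{ψ,κ,P}` over the unit ball, with
`(c₁, c₂)` the point at which `F_κ` is evaluated and `s` the multiplier of `‖h‖_P ≤ 1`. -/
structure IsKKTPoint (P : Measure Pt) (φ : ℝ → ℝ) (ψ κ c₁ c₂ s : ℝ) (h : Pt → ℝ) : Prop where
  memLp : MemLp h 2 P
  ip_self : ip P h h = 1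
  ip_mulSqrtX_Wc : ip P (mulSqrtX h) Wc = c₁
  pnorm_projW_mulSqrtX : pnorm P (projW P (mulSqrtX h)) = c₂
  stationary : ∀ᵐ q ∂P, (c₂⁻¹ * d2F φ κ c₁ c₂ * √(Xc q) ^ 2 + √ψ * s) * h q
    = -(√(Xc q) * (√ψ * Gc q + sysCoeff φ κ c₁ c₂ * Wc q))

namespace IsKKTPoint

lemma mem_unitBall (hh : IsKKTPoint P φ ψ κ c₁ c₂ s h) : h ∈ unitBall P :=
  ⟨hh.memLp, by rw [pnorm, hh.ip_self, Real.sqrt_one]⟩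

lemma stationary_ip (hP : IsNormalizedDesign P B) (hh : IsKKTPoint P φ ψ κ c₁ c₂ s h)
    (hk : MemLp k 2 P) :
    c₂⁻¹ * d2F φ κ c₁ c₂ * ip P (mulSqrtX h) (mulSqrtX k) + √ψ * s * ip P h k
      = -(√ψ * ip P (mulSqrtX k) Gc
        + sysCoeff φ κ c₁ c₂ * ip P (mulSqrtX k) Wc) := by
  have hXk := hP.memLp_mulSqrtX hk
  have hi₁ := ((hP.memLp_mulSqrtX hh.memLp).integrable_mul hXk).const_mul (c₂⁻¹ * d2F φ κ c₁ c₂)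
  have hi₂ := (hh.memLp.integrable_mul hk).const_mul (√ψ * s)
  have hi₃ := (hXk.integrable_mul hP.memLp_Gc).const_mul (√ψ)
  have hi₄ := (hXk.integrable_mul hP.memLp_Wc).const_mul (sysCoeff φ κ c₁ c₂)
  simp only [Pi.mul_apply] at hi₁ hi₂ hi₃ hi₄
  simp only [ip, ← integral_const_mul]
  rw [← integral_add hi₁ hi₂, ← integral_add hi₃ hi₄, ← integral_neg]
  refine integral_congr_ae ?_
  filter_upwards [hh.stationary] with q hq
  simp only [mulSqrtX]
  linear_combination k q * hq

lemma Rfun_eq_Tval (hP : IsNormalizedDesign P B) (hh : IsKKTPoint P φ ψ κ c₁ c₂ s h)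
    (hψ : 0 < ψ) (hc₂ : 0 < c₂) : Rfun φ P ψ κ h = Tval φ ψ κ c₁ c₂ s := by
  have hσ := (Real.sqrt_pos.2 hψ).ne'
  have hself : ip P (mulSqrtX h) (mulSqrtX h) = c₁ ^ 2 + c₂ ^ 2 := by
    have hsq := hP.sq_pnorm_projW (hP.memLp_mulSqrtX hh.memLp)
    rw [hh.pnorm_projW_mulSqrtX, hh.ip_mulSqrtX_Wc] at hsq
    linarith
  have hstat := hh.stationary_ip hP hh.memLp
  rw [hself, hh.ip_self, hh.ip_mulSqrtX_Wc, sysCoeff] at hstat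
  have hG : √ψ * ip P (mulSqrtX h) Gc
      = -(c₁ * d1F φ κ c₁ c₂ + c₂ * d2F φ κ c₁ c₂ + √ψ * s) := by
    refine mul_left_cancel₀ hc₂.ne' ?_
    field_simp at hstat
    linear_combination hstat
  rw [hP.Rfun_eq, hh.ip_mulSqrtX_Wc, hh.pnorm_projW_mulSqrtX, Tval, ← mul_right_inj' hσ, mul_add,
    mul_sub, hG, mul_inv_cancel_left₀ hσ, mul_inv_cancel_left₀ hσ]
  ring

lemma Tval_le_Rfun (hP : IsNormalizedDesign P B) (hh : IsKKTPoint P φ ψ κ c₁ c₂ s h)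
    (hφ : IsLabelProb φ) (hκ : 0 < κ) (hψ : 0 < ψ) (hc₂ : 0 < c₂) (hs : 0 < s)
    (hk : k ∈ unitBall P) : Tval φ ψ κ c₁ c₂ s ≤ Rfun φ P ψ κ k := by
  have hσ := Real.sqrt_pos.2 hψ
  have hXh := hP.memLp_mulSqrtX hh.memLp
  have hXk := hP.memLp_mulSqrtX hk.1
  set c₁' := ip P (mulSqrtX k) Wc
  set c₂' := pnorm P (projW P (mulSqrtX k))
  set e := c₂⁻¹ * d2F φ κ c₁ c₂ with he
  have he0 : 0 ≤ e := mul_nonneg (inv_nonneg.2 hc₂.le) (hφ.d2F_nonneg hκ c₁ hc₂)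
  have hd2 : d2F φ κ c₁ c₂ = e * c₂ := by rw [he]; field_simp
  -- The linear part of `𝓡` is traded for inner products with `h` by stationarity; the resulting
  -- bilinear terms are bounded by Cauchy–Schwarz, with equality at `k = h`.
  have hcross : ip P (mulSqrtX h) (mulSqrtX k) - c₁ * c₁' ≤ c₂ * c₂' := by
    have hle := (le_abs_self _).trans
      (abs_ip_le_pnorm_mul_pnorm (hP.memLp_projW hXh) (hP.memLp_projW hXk))
    rwa [hP.ip_projW_projW hXh hXk, hh.ip_mulSqrtX_Wc, hh.pnorm_projW_mulSqrtX] at hle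
  have hstat := hh.stationary_ip hP hk.1
  have hsupport := hφ.Fk_add_d1F_mul_add_d2F_mul_le hκ c₁ c₂ c₁' c₂'
  have hpair := ip_le_one_of_mem_unitBall hh.mem_unitBall hk
  have hσs := mul_pos hσ hs
  rw [hP.Rfun_eq, Tval, ← mul_le_mul_iff_right₀ hσ, mul_add, mul_sub,
    mul_inv_cancel_left₀ hσ.ne', mul_inv_cancel_left₀ hσ.ne']
  rw [sysCoeff, mul_assoc c₁, ← he] at hstat
  rw [hd2] at hsupport ⊢
  nlinarith [mul_le_mul_of_nonneg_left hcross he0, mul_le_mul_of_nonneg_left hpair hσs.le]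

lemma isLeast (hP : IsNormalizedDesign P B) (hh : IsKKTPoint P φ ψ κ c₁ c₂ s h)
    (hφ : IsLabelProb φ) (hκ : 0 < κ) (hψ : 0 < ψ) (hc₂ : 0 < c₂) (hs : 0 < s) :
    IsLeast (Rfun φ P ψ κ '' unitBall P) (Tval φ ψ κ c₁ c₂ s) :=
  ⟨⟨h, hh.mem_unitBall, hh.Rfun_eq_Tval hP hψ hc₂⟩, by
    rintro _ ⟨k, hk, rfl⟩
    exact hh.Tval_le_Rfun hP hφ hκ hψ hc₂ hs hk⟩

end IsKKTPoint

end Minimizer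

section Monotonicity

variable {P : Measure Pt} {B : ℝ} {φ : ℝ → ℝ} {κ : ℝ}

lemma IsLabelProb.strictAntiOn_Rfun (hφ : IsLabelProb φ) (hκ : 0 < κ) (P : Measure Pt)
    (h : Pt → ℝ) : StrictAntiOn (fun ψ => Rfun φ P ψ κ h) (Set.Ioi (psiStar0 φ)) := by
  intro ψ hψ ψ' _ hlt
  have hψ0 : 0 < ψ := (psiStar0_nonneg φ).trans_lt hψ
  refine (add_lt_add_iff_right _).2 (mul_lt_mul_of_pos_right ?_ (hφ.Fk_pos hκ _ _))
  exact inv_strictAnti₀ (Real.sqrt_pos.2 hψ0) (Real.sqrt_lt_sqrt hψ0.le hlt)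

namespace IsNormalizedDesign

lemma tendsto_Rfun_atTop (hP : IsNormalizedDesign P B) (φ : ℝ → ℝ) (κ : ℝ) (h : Pt → ℝ) :
    Tendsto (fun ψ => Rfun φ P ψ κ h) atTop (𝓝 (ip P (mulSqrtX h) Gc)) := by
  simp only [hP.Rfun_eq]
  simpa only [Function.comp_apply, zero_mul, zero_add] using ((tendsto_inv_atTop_zero.comp
    Real.tendsto_sqrt_atTop).mul_const _).add_const (ip P (mulSqrtX h) Gc)

lemma exists_psiStar0_lt_forall_Rfun_pos (hP : IsNormalizedDesign P B) (hφ : IsLabelProb φ)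
    (hκ : 0 < κ) : ∃ ψ, psiStar0 φ < ψ ∧ ∀ h ∈ unitBall P, 0 < Rfun φ P ψ κ h := by
  obtain ⟨ψ, hψ, hgap⟩ :=
    hφ.exists_psiStar0_lt_forall_sqrt_mul_lt_Fk hκ (R := √B + 1) (by positivity)
  refine ⟨ψ, hψ, fun h hh => ?_⟩
  have hσ : 0 < √ψ := Real.sqrt_pos.2 ((psiStar0_nonneg φ).trans_lt hψ)
  have hXh := hP.memLp_mulSqrtX hh.1
  have hbound : pnorm P (mulSqrtX h) ≤ √B + 1 := (hP.pnorm_mulSqrtX_le hh).trans (by simp)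
  have hF := hgap _ _ ((hP.abs_ip_Wc_le hXh).trans hbound) (pnorm_nonneg P _)
    ((hP.pnorm_projW_le hXh).trans hbound)
  have hG := neg_le_of_abs_le (hP.abs_ip_Gc_le_pnorm_projW hXh)
  rw [hP.Rfun_eq]
  linarith [(lt_inv_mul_iff₀ hσ).2 hF]

end IsNormalizedDesign

end Monotonicity

section ProductLaw

/-- The function `G·α(X, W) + β(X, W)` of `(G, X, W)`. Functions of this form are closed under
`mulSqrtX`, and their inner products under `N(0,1) ⊗ μ` are integrals over `μ` alone. -/
def affineG (α β : ℝ × ℝ → ℝ) : Pt → ℝ := fun q => q.1 * α q.2 + β q.2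

variable {μ : Measure (ℝ × ℝ)} {B : ℝ} {α β α' β' : ℝ × ℝ → ℝ}

lemma Gc_eq_affineG : Gc = affineG 1 0 := by
  ext q
  simp [Gc, affineG]

lemma Wc_eq_affineG : Wc = affineG 0 Prod.snd := by
  ext q
  simp [Wc, affineG]

lemma mulSqrtX_affineG (α β : ℝ × ℝ → ℝ) :
    mulSqrtX (affineG α β) = affineG (fun q => √q.1 * α q) (fun q => √q.1 * β q) := by
  ext q
  simp only [mulSqrtX, affineG, Xc]
  ring

lemma memLp_affineG [SFinite μ] (hα : MemLp α 2 μ) (hβ : MemLp β 2 μ) :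
    MemLp (affineG α β) 2 (stdG.prod μ) := by
  have hβ' : MemLp (fun q : Pt => β q.2) 2 (stdG.prod μ) := hβ.comp_snd stdG
  have hα' : MemLp (fun q : Pt => q.1 * α q.2) 2 (stdG.prod μ) := by
    refine (memLp_two_iff_integrable_sq (memLp_id_stdG.1.comp_fst.mul hα.1.comp_snd)).2 ?_
    simpa only [Pi.mul_apply, mul_pow] using memLp_id_stdG.integrable_sq.mul_prod hα.integrable_sq
  exact hα'.add hβ'

lemma ip_affineG [SFinite μ] (hα : MemLp α 2 μ) (hβ : MemLp β 2 μ) (hα' : MemLp α' 2 μ)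
    (hβ' : MemLp β' 2 μ) :
    ip (stdG.prod μ) (affineG α β) (affineG α' β') = ∫ q, (α q * α' q + β q * β' q) ∂μ := by
  have hαα' : Integrable (fun q => α q * α' q) μ := hα.integrable_mul hα'
  have hββ' : Integrable (fun q => β q * β' q) μ := hβ.integrable_mul hβ'
  have hcross : Integrable (fun q => α q * β' q + β q * α' q) μ :=
    (hα.integrable_mul hβ').add (hβ.integrable_mul hα')
  have hi₁ := memLp_id_stdG.integrable_sq.mul_prod hαα'
  have hi₂ := (memLp_id_stdG.integrable one_le_two).mul_prod hcross
  have hi₃ : Integrable (fun q : Pt => β q.2 * β' q.2) (stdG.prod μ) := hββ'.comp_snd stdG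
  calc ip (stdG.prod μ) (affineG α β) (affineG α' β')
      = ∫ q : Pt, (q.1 ^ 2 * (α q.2 * α' q.2) + q.1 * (α q.2 * β' q.2 + β q.2 * α' q.2)
          + β q.2 * β' q.2) ∂stdG.prod μ := by
        refine integral_congr_ae (ae_of_all _ fun q => ?_)
        simp only [affineG]
        ring
    _ = (∫ g, g ^ 2 ∂stdG) * (∫ q, α q * α' q ∂μ)
          + (∫ g, g ∂stdG) * (∫ q, (α q * β' q + β q * α' q) ∂μ) + ∫ q, β q * β' q ∂μ := by
        rw [integral_add (by exact hi₁.add hi₂) hi₃, integral_add hi₁ hi₂,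
          integral_prod_mul (fun g => g ^ 2) fun q => α q * α' q,
          integral_prod_mul (fun g => g) fun q => α q * β' q + β q * α' q,
          integral_fun_snd fun q => β q * β' q, probReal_univ, one_smul]
    _ = ∫ q, (α q * α' q + β q * β' q) ∂μ := by
        rw [integral_sq_stdG, integral_id_stdG, one_mul, zero_mul, add_zero,
          integral_add hαα' hββ']

lemma memLp_two_of_integral_sq_ne_zero {Ω : Type*} [MeasurableSpace Ω] {ν : Measure Ω}
    {g : Ω → ℝ} (hg : AEStronglyMeasurable g ν) (h0 : ∫ x, g x ^ 2 ∂ν ≠ 0) : MemLp g 2 ν :=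
  (memLp_two_iff_integrable_sq hg).2 (Integrable.of_integral_ne_zero h0)

lemma memLp_snd_of_integral_sq_eq_one (hw2 : ∫ q, q.2 ^ 2 ∂μ = 1) :
    MemLp (Prod.snd : ℝ × ℝ → ℝ) 2 μ :=
  memLp_two_of_integral_sq_ne_zero measurable_snd.aestronglyMeasurable (hw2 ▸ one_ne_zero)

lemma isNormalizedDesign_prod [IsProbabilityMeasure μ] (hX : ∀ᵐ q ∂μ, q.1 ∈ Set.Ioc 0 B)
    (hw2 : ∫ q, q.2 ^ 2 ∂μ = 1) : IsNormalizedDesign (stdG.prod μ) B := by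
  have hw := memLp_snd_of_integral_sq_eq_one hw2
  have hone : MemLp (1 : ℝ × ℝ → ℝ) 2 μ := memLp_const 1
  have hzero : MemLp (0 : ℝ × ℝ → ℝ) 2 μ := MemLp.zero
  constructor
  · exact Gc_eq_affineG ▸ memLp_affineG hone hzero
  · exact Wc_eq_affineG ▸ memLp_affineG hzero hw
  · simp [Gc_eq_affineG, ip_affineG hone hzero hone hzero]
  · simp [Gc_eq_affineG, Wc_eq_affineG, ip_affineG hone hzero hzero hw]
  · simpa [Wc_eq_affineG, ip_affineG hzero hw hzero hw, ← sq] using hw2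
  · exact Measure.quasiMeasurePreserving_snd.ae hX

end ProductLaw

section SolutionDirection

/-- The denominator `D = c₂⁻¹∂₂F_κ(c₁,c₂)·x^{1/2} + ψ^{1/2}·s·x^{−1/2}` of the system
`SolSysMu`. -/
def sysDenom (φ : ℝ → ℝ) (ψ κ c₁ c₂ s x : ℝ) : ℝ :=
  c₂⁻¹ * d2F φ κ c₁ c₂ * √x + √ψ * s * (√x)⁻¹

/-- The direction `−(ψ^{1/2}G + A·W)/D`, which satisfies the Karush–Kuhn–Tucker conditions when
`(c₁, c₂, s)` solves `SolSysMu`. -/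
def solDirection (φ : ℝ → ℝ) (ψ κ c₁ c₂ s : ℝ) : Pt → ℝ :=
  affineG (fun q => -√ψ / sysDenom φ ψ κ c₁ c₂ s q.1)
    (fun q => -sysCoeff φ κ c₁ c₂ * q.2 / sysDenom φ ψ κ c₁ c₂ s q.1)

variable {μ : Measure (ℝ × ℝ)} {B : ℝ} {φ : ℝ → ℝ} {ψ κ c₁ c₂ s : ℝ}

lemma solSysMu_iff : SolSysMu φ μ ψ κ c₁ c₂ s ↔
    -c₁ = ∫ q, sysCoeff φ κ c₁ c₂ * q.2 ^ 2 * √q.1 / sysDenom φ ψ κ c₁ c₂ s q.1 ∂μ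
    ∧ c₁ ^ 2 + c₂ ^ 2 = ∫ q, (ψ * q.1 + sysCoeff φ κ c₁ c₂ ^ 2 * q.2 ^ 2 * q.1)
        / sysDenom φ ψ κ c₁ c₂ s q.1 ^ 2 ∂μ
    ∧ 1 = ∫ q, (ψ + sysCoeff φ κ c₁ c₂ ^ 2 * q.2 ^ 2) / sysDenom φ ψ κ c₁ c₂ s q.1 ^ 2 ∂μ :=
  Iff.rfl

lemma measurable_sysDenom (φ : ℝ → ℝ) (ψ κ c₁ c₂ s : ℝ) :
    Measurable (sysDenom φ ψ κ c₁ c₂ s) := by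
  unfold sysDenom
  fun_prop

lemma IsLabelProb.le_sysDenom (hφ : IsLabelProb φ) (hκ : 0 < κ) (ψ c₁ : ℝ) (hc₂ : 0 < c₂)
    (hs : 0 < s) {x : ℝ} (hx : x ∈ Set.Ioc 0 B) :
    √ψ * s * (√B)⁻¹ ≤ sysDenom φ ψ κ c₁ c₂ s x := by
  have he : 0 ≤ c₂⁻¹ * d2F φ κ c₁ c₂ * √x :=
    mul_nonneg (mul_nonneg (inv_nonneg.2 hc₂.le) (hφ.d2F_nonneg hκ c₁ hc₂)) (Real.sqrt_nonneg x)
  have hinv : (√B)⁻¹ ≤ (√x)⁻¹ := inv_anti₀ (Real.sqrt_pos.2 hx.1) (Real.sqrt_le_sqrt hx.2)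
  have hle := mul_le_mul_of_nonneg_left hinv (mul_nonneg (Real.sqrt_nonneg ψ) hs.le)
  rw [sysDenom]
  linarith

lemma IsLabelProb.memLp_div_sysDenom (hφ : IsLabelProb φ) (hκ : 0 < κ) (hψ : 0 < ψ) (c₁ : ℝ)
    (hc₂ : 0 < c₂) (hs : 0 < s) (hX : ∀ᵐ q ∂μ, q.1 ∈ Set.Ioc 0 B) {β : ℝ × ℝ → ℝ}
    (hβ : MemLp β 2 μ) : MemLp (fun q => β q / sysDenom φ ψ κ c₁ c₂ s q.1) 2 μ := by
  have hD : Measurable fun q : ℝ × ℝ => sysDenom φ ψ κ c₁ c₂ s q.1 :=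
    (measurable_sysDenom φ ψ κ c₁ c₂ s).comp measurable_fst
  refine hβ.of_le_mul (c := (√ψ * s * (√B)⁻¹)⁻¹) ?_ ?_
  · exact (hβ.1.aemeasurable.div hD.aemeasurable).aestronglyMeasurable
  filter_upwards [hX] with q hq
  have hlow : 0 < √ψ * s * (√B)⁻¹ :=
    mul_pos (mul_pos (Real.sqrt_pos.2 hψ) hs) (inv_pos.2 (Real.sqrt_pos.2 (hq.1.trans_le hq.2)))
  have hle := hφ.le_sysDenom hκ ψ c₁ hc₂ hs hq
  rw [norm_div, div_eq_inv_mul, Real.norm_of_nonneg (hlow.le.trans hle)]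
  exact mul_le_mul_of_nonneg_right (inv_anti₀ hlow hle) (norm_nonneg _)

lemma IsLabelProb.solDirection_stationary (hφ : IsLabelProb φ) (hκ : 0 < κ) (hψ : 0 < ψ) (c₁ : ℝ)
    (hc₂ : 0 < c₂) (hs : 0 < s) {q : Pt} (hq : 0 < Xc q) :
    (c₂⁻¹ * d2F φ κ c₁ c₂ * √(Xc q) ^ 2 + √ψ * s) * solDirection φ ψ κ c₁ c₂ s q
      = -(√(Xc q) * (√ψ * Gc q + sysCoeff φ κ c₁ c₂ * Wc q)) := by
  have hx : √(Xc q) ≠ 0 := (Real.sqrt_pos.2 hq).ne'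
  have hD : sysDenom φ ψ κ c₁ c₂ s (Xc q) ≠ 0 := by
    refine (lt_of_lt_of_le ?_ (hφ.le_sysDenom hκ ψ c₁ hc₂ hs ⟨hq, le_rfl⟩)).ne'
    exact mul_pos (mul_pos (Real.sqrt_pos.2 hψ) hs) (inv_pos.2 (Real.sqrt_pos.2 hq))
  have hfactor : c₂⁻¹ * d2F φ κ c₁ c₂ * √(Xc q) ^ 2 + √ψ * s
      = √(Xc q) * sysDenom φ ψ κ c₁ c₂ s (Xc q) := by
    rw [sysDenom]
    field_simp
  have hdir : sysDenom φ ψ κ c₁ c₂ s (Xc q) * solDirection φ ψ κ c₁ c₂ s q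
      = -(√ψ * Gc q + sysCoeff φ κ c₁ c₂ * Wc q) := by
    simp only [solDirection, affineG, Gc, Wc]
    simp only [Xc] at hD ⊢
    field_simp
    ring
  rw [hfactor, mul_assoc, hdir, mul_neg]

lemma memLp_sqrt_fst_mul (hX : ∀ᵐ q ∂μ, q.1 ∈ Set.Ioc 0 B) {β : ℝ × ℝ → ℝ} (hβ : MemLp β 2 μ) :
    MemLp (fun q => √q.1 * β q) 2 μ := by
  have hsqrt : Measurable fun q : ℝ × ℝ => √q.1 := by fun_prop
  refine hβ.of_le_mul (c := √B) (hsqrt.aestronglyMeasurable.mul hβ.1) ?_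
  filter_upwards [hX] with q hq
  rw [norm_mul, Real.norm_of_nonneg (Real.sqrt_nonneg _)]
  exact mul_le_mul_of_nonneg_right (Real.sqrt_le_sqrt hq.2) (norm_nonneg _)

lemma SolSysMu.isKKTPoint [IsProbabilityMeasure μ] (hS : SolSysMu φ μ ψ κ c₁ c₂ s)
    (hφ : IsLabelProb φ) (hκ : 0 < κ) (hψ : 0 < ψ) (hc₂ : 0 < c₂) (hs : 0 < s)
    (hX : ∀ᵐ q ∂μ, q.1 ∈ Set.Ioc 0 B) (hw2 : ∫ q, q.2 ^ 2 ∂μ = 1) :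
    IsKKTPoint (stdG.prod μ) φ ψ κ c₁ c₂ s (solDirection φ ψ κ c₁ c₂ s) := by
  obtain ⟨hS₁, hS₂, hS₃⟩ := solSysMu_iff.1 hS
  have hP := isNormalizedDesign_prod hX hw2
  have hw := memLp_snd_of_integral_sq_eq_one hw2
  have hα := hφ.memLp_div_sysDenom hκ hψ c₁ hc₂ hs hX (memLp_const (-√ψ))
  have hβ := hφ.memLp_div_sysDenom hκ hψ c₁ hc₂ hs hX (hw.const_mul (-sysCoeff φ κ c₁ c₂))
  have hXα := memLp_sqrt_fst_mul hX hα
  have hXβ := memLp_sqrt_fst_mul hX hβ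
  have hσ := Real.mul_self_sqrt hψ.le
  have hmem : MemLp (solDirection φ ψ κ c₁ c₂ s) 2 (stdG.prod μ) := memLp_affineG hα hβ
  have hmean : ip (stdG.prod μ) (mulSqrtX (solDirection φ ψ κ c₁ c₂ s)) Wc = c₁ := by
    rw [← neg_inj, hS₁, solDirection, mulSqrtX_affineG, Wc_eq_affineG,
      ip_affineG hXα hXβ MemLp.zero hw, ← integral_neg]
    refine integral_congr_ae (ae_of_all _ fun q => ?_)
    simp only [Pi.zero_apply]
    ring
  refine ⟨hmem, ?_, hmean, ?_, ?_⟩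
  · rw [solDirection, ip_affineG hα hβ hα hβ, hS₃]
    refine integral_congr_ae (ae_of_all _ fun q => ?_)
    linear_combination (sysDenom φ ψ κ c₁ c₂ s q.1)⁻¹ ^ 2 * hσ
  · rw [← sq_eq_sq₀ (pnorm_nonneg _ _) hc₂.le, hP.sq_pnorm_projW (hP.memLp_mulSqrtX hmem), hmean,
      sub_eq_iff_eq_add', hS₂, solDirection, mulSqrtX_affineG, ip_affineG hXα hXβ hXα hXβ]
    refine integral_congr_ae ?_
    filter_upwards [hX] with q hq
    have hx := Real.mul_self_sqrt hq.1.le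
    set D := sysDenom φ ψ κ c₁ c₂ s q.1
    set A := sysCoeff φ κ c₁ c₂
    linear_combination D⁻¹ ^ 2 * (√q.1 * √q.1 * hσ + (ψ + A ^ 2 * q.2 ^ 2) * hx)
  · filter_upwards [hP.Xc_mem] with q hq
    exact hφ.solDirection_stationary hκ hψ c₁ hc₂ hs hq.1

end SolutionDirection

section Monotone

lemma strictAntiOn_of_isLeast_image {ι X γ : Type*} [Preorder ι] [Preorder γ] {R : ι → X → γ}
    {T : ι → γ} {I : Set ι} {S : Set X} (hT : ∀ i ∈ I, IsLeast (R i '' S) (T i))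
    (hR : ∀ x ∈ S, StrictAntiOn (fun i => R i x) I) : StrictAntiOn T I := by
  intro i hi j hj hij
  obtain ⟨x, hx, hval⟩ := (hT i hi).1
  exact hval ▸ ((hT j hj).2 ⟨x, hx, rfl⟩).trans_lt (hR x hx hi hj hij)

variable {α β : Type*} [CompleteLinearOrder β] [TopologicalSpace β] [OrderTopology β]

lemma exists_tendsto_atTop_lt_of_antitoneOn [LinearOrder α] {u : α → β} {a b : α} {y : β}
    (hu : AntitoneOn u (Set.Ioi a)) (hb : a < b) (hy : u b < y) :
    ∃ L, Tendsto u atTop (𝓝 L) ∧ L < y := by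
  have hmax : Antitone fun x => u (max x b) := fun _ _ hxy =>
    hu (hb.trans_le (le_max_right _ _)) (hb.trans_le (le_max_right _ _)) (max_le_max_right _ hxy)
  refine ⟨⨅ x, u (max x b), (tendsto_atTop_iInf hmax).congr' ?_, ?_⟩
  · filter_upwards [eventually_ge_atTop b] with x hx
    rw [max_eq_left hx]
  · exact (iInf_le _ b).trans_lt (by rwa [max_self])

lemma exists_tendsto_nhdsGT_lt_of_antitoneOn [LinearOrder α] [TopologicalSpace α]
    [OrderTopology α] {u : α → β} {a b : α} {y : β} (hu : AntitoneOn u (Set.Ioi a)) (hb : a < b)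
    (hy : y < u b) : ∃ L, Tendsto u (𝓝[>] a) (𝓝 L) ∧ y < L :=
  ⟨_, hu.tendsto_nhdsGT (OrderTop.bddAbove _), hy.trans_le (le_sSup ⟨b, hb, rfl⟩)⟩

end Monotone

theorem statement_8_general {φ : ℝ → ℝ} (hφ : IsLabelProb φ) (μ : Measure (ℝ × ℝ))
    [IsProbabilityMeasure μ] {B : ℝ} (hX : ∀ᵐ q ∂μ, q.1 ∈ Set.Ioc 0 B)
    (hw2 : ∫ q, q.2 ^ 2 ∂μ = 1) {κ : ℝ} (hκ : 0 < κ) {c₁ c₂ s : ℝ → ℝ}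
    (hsol : ∀ ψ, psiDown φ μ κ < ψ →
      0 < c₂ ψ ∧ 0 < s ψ ∧ SolSysMu φ μ ψ κ (c₁ ψ) (c₂ ψ) (s ψ)) :
    StrictAntiOn (fun ψ => Tval φ ψ κ (c₁ ψ) (c₂ ψ) (s ψ)) (Set.Ioi (psiDown φ μ κ))
    ∧ (∃ L : EReal,
        Tendsto (fun ψ => (Tval φ ψ κ (c₁ ψ) (c₂ ψ) (s ψ) : EReal)) atTop (𝓝 L) ∧ L < 0)
    ∧ (∃ L : EReal,
        Tendsto (fun ψ => (Tval φ ψ κ (c₁ ψ) (c₂ ψ) (s ψ) : EReal)) (𝓝[>] psiDown φ μ κ) (𝓝 L)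
          ∧ 0 < L) := by
  rw [hφ.psiDown_eq_psiStar0 μ κ] at hsol ⊢
  have hP := isNormalizedDesign_prod hX hw2
  have hmin : ∀ ψ ∈ Set.Ioi (psiStar0 φ),
      IsLeast (Rfun φ (stdG.prod μ) ψ κ '' unitBall (stdG.prod μ))
        (Tval φ ψ κ (c₁ ψ) (c₂ ψ) (s ψ)) := fun ψ hψ => by
    have hψ0 := (psiStar0_nonneg φ).trans_lt hψ
    obtain ⟨hc₂, hs, hS⟩ := hsol ψ hψ
    exact (hS.isKKTPoint hφ hκ hψ0 hc₂ hs hX hw2).isLeast hP hφ hκ hψ0 hc₂ hs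
  have hanti := strictAntiOn_of_isLeast_image hmin fun h _ => hφ.strictAntiOn_Rfun hκ _ h
  have hantiE : AntitoneOn (fun ψ => (Tval φ ψ κ (c₁ ψ) (c₂ ψ) (s ψ) : EReal))
      (Set.Ioi (psiStar0 φ)) := fun x hx y hy hxy =>
    EReal.coe_le_coe_iff.2 (hanti.antitoneOn hx hy hxy)
  refine ⟨hanti, ?_, ?_⟩
  · obtain ⟨h, hh, hneg⟩ := hP.exists_mem_unitBall_ip_mulSqrtX_Gc_neg
    obtain ⟨ψ, hR, hψ⟩ := (((hP.tendsto_Rfun_atTop φ κ h).eventually_lt_const hneg).and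
      (eventually_gt_atTop (psiStar0 φ))).exists
    exact exists_tendsto_atTop_lt_of_antitoneOn hantiE hψ
      (EReal.coe_neg'.2 (((hmin ψ hψ).2 ⟨h, hh, rfl⟩).trans_lt hR))
  · obtain ⟨ψ, hψ, hR⟩ := hP.exists_psiStar0_lt_forall_Rfun_pos hφ hκ
    obtain ⟨h, hh, hval⟩ := (hmin ψ hψ).1
    exact exists_tendsto_nhdsGT_lt_of_antitoneOn hantiE hψ (EReal.coe_pos.2 (hval ▸ hR h hh))

/-- For fixed `κ > 0`, the map `ψ ↦ T(ψ,κ)` is strictly decreasing on `(ψ↓(κ), ∞)` and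
satisfies `lim_{ψ→∞} T(ψ,κ) < 0 < lim_{ψ↓ψ↓(κ)} T(ψ,κ)` (limits taken in the extended reals). -/
theorem statement_8 (f : ℝ → ℝ) (hf : Continuous f) (hf01 : ∀ x, f x ∈ Set.Icc (0:ℝ) 1)
    (ρ : ℝ) (hρ : 0 < ρ) (hnd : NonDeg (fun x => f (ρ * x)))
    (μ : Measure (ℝ × ℝ)) [IsProbabilityMeasure μ]
    (xmin xmax : ℝ) (hxmin : 0 < xmin) (hxx : xmin ≤ xmax)
    (hsupp : ∀ᵐ q ∂μ, q.1 ∈ Set.Icc xmin xmax)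
    (hw2 : ∫ q, q.2 ^ 2 ∂μ = 1)
    (κ : ℝ) (hκ : 0 < κ)
    (sol : ℝ → ℝ × ℝ × ℝ)
    (hsol : ∀ ψ : ℝ, psiDown (fun x => f (ρ * x)) μ κ < ψ →
      0 < (sol ψ).2.1 ∧ 0 < (sol ψ).2.2
        ∧ SolSysMu (fun x => f (ρ * x)) μ ψ κ (sol ψ).1 (sol ψ).2.1 (sol ψ).2.2
        ∧ ∀ c₁ c₂ s : ℝ, 0 < c₂ → 0 < s →
            SolSysMu (fun x => f (ρ * x)) μ ψ κ c₁ c₂ s → (c₁, c₂, s) = sol ψ) :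
    StrictAntiOn (fun ψ : ℝ =>
        Tval (fun x => f (ρ * x)) ψ κ (sol ψ).1 (sol ψ).2.1 (sol ψ).2.2)
      (Set.Ioi (psiDown (fun x => f (ρ * x)) μ κ))
    ∧ (∃ L : EReal,
        Tendsto (fun ψ : ℝ =>
            ((Tval (fun x => f (ρ * x)) ψ κ (sol ψ).1 (sol ψ).2.1 (sol ψ).2.2 : ℝ) : EReal))
          atTop (nhds L) ∧ L < 0)
    ∧ (∃ L : EReal,
        Tendsto (fun ψ : ℝ =>
            ((Tval (fun x => f (ρ * x)) ψ κ (sol ψ).1 (sol ψ).2.1 (sol ψ).2.2 : ℝ) : EReal))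
          (nhdsWithin (psiDown (fun x => f (ρ * x)) μ κ)
            (Set.Ioi (psiDown (fun x => f (ρ * x)) μ κ))) (nhds L) ∧ 0 < L) :=
  statement_8_general ⟨(hf.comp (continuous_const_mul ρ)).measurable, fun _ => hf01 _⟩ μ
    (hsupp.mono fun _ hq => ⟨hxmin.trans_le hq.1, hq.2⟩) hw2 hκ fun ψ hψ =>
      ⟨(hsol ψ hψ).1, (hsol ψ hψ).2.1, (hsol ψ hψ).2.2.1⟩

end MaxMargin
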